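/- arXiv:2411.03508 — 4 statements merged into one kernel-verified Lean document; each statement's English description precedes it below -/
import Mathlib

section
/- Let P = (a,c) be a K-point of the affine curve y^d = f(x) (so c^d = f(a)), and suppose that m > 1 is the least positive integer such that m_P^m is a principal ideal of A (i.e., P is a torsion point of order m on the Jacobian of the smooth projective model). Then either m = d or m ≥ n. -/
open Polynomial

/-- The affine coordinate ring `A = K[X,Y]/(Y^d − f(X))` of the curve `y^d = f(x)`,
realized as `AdjoinRoot` of the polynomial `Y^d - f(X)` over `K[X]`. -/
noncomputable abbrev CurveRing (K : Type*) [Field K] (d : ℕ) (f : K[X]) : Type _ :=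
  AdjoinRoot ((X : K[X][X]) ^ d - C f)

/-- The maximal ideal `m_{(a,c)} = (X - a, Y - c)` of the coordinate ring. -/
noncomputable def ptIdeal {K : Type*} [Field K] (d : ℕ) (f : K[X]) (a c : K) :
    Ideal (CurveRing K d f) :=
  Ideal.span {AdjoinRoot.of _ (X - C a), AdjoinRoot.root _ - AdjoinRoot.of _ (C c)}

/-- `P = (a,c)` is a torsion point of order `m` on the Jacobian: `m` is the least
positive integer such that `m_P ^ m` is a principal ideal of `A`. -/
def IsTorsionOfOrder {K : Type*} [Field K] (d : ℕ) (f : K[X]) (a c : K) (m : ℕ) : Prop :=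
  IsLeast {k : ℕ | 0 < k ∧ (ptIdeal d f a c ^ k).IsPrincipal} m

/-!
If `m_P ^ m = (g)`, then computing the `K`-dimension of `A ⧸ m_P ^ m` in two ways gives
`m = deg N(g)`, where `N` is the norm from `A` to `K[X]`. Write `g = ∑ i < d, gᵢ(x) y ^ i`. The pole
orders `d * deg gᵢ + n * i` of the terms at infinity are distinct modulo `d`, because `n` is coprime
to `d`; hence `deg N(g)` is their maximum. If `m < n`, no positive power of `y` can occur, so `g` is
a polynomial in `x`. It vanishes at `P = (a, c)`, so it is a multiple of `x - a`; by minimality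
of `m` it is irreducible, so it is associated to `x - a`, and `m = deg N(x - a) = d`.
-/

section Degree

variable {R ι : Type*} [CommRing R] [Fintype ι] [DecidableEq ι]

lemma degree_det_eq_of_forall_degree_lt (M : Matrix ι ι R[X]) (τ : Equiv.Perm ι)
    (hlt : ∀ σ ≠ τ, degree (∏ j, M (σ j) j) < degree (∏ j, M (τ j) j)) (hne : ∏ j, M (τ j) j ≠ 0) :
    degree M.det = degree (∏ j, M (τ j) j) := by
  have degree_sign_smul (σ : Equiv.Perm ι) (p : R[X]) :
      degree (Equiv.Perm.sign σ • p) = degree p := by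
    rcases Int.units_eq_one_or (Equiv.Perm.sign σ) with h | h <;> simp [h]
  rw [Matrix.det_apply, ← Finset.add_sum_erase _ _ (Finset.mem_univ τ),
    degree_add_eq_left_of_degree_lt, degree_sign_smul]
  refine (degree_sum_le _ _).trans_lt ?_
  rw [degree_sign_smul, Finset.sup_lt_iff (bot_lt_iff_ne_bot.2 (degree_ne_bot.2 hne))]
  intro σ hσ
  rw [degree_sign_smul]
  exact hlt σ (Finset.ne_of_mem_erase hσ)

/- The weights `w` cancel in each term of the Leibniz formula, because `∑ j, w (σ j) = ∑ j, w j`;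
so the term of `τ` strictly dominates every other nonzero term. -/
lemma mul_natDegree_det_of_weights [IsDomain R] (M : Matrix ι ι R[X]) (τ : Equiv.Perm ι)
    (w : ι → ℕ) (D W : ℕ) (hne : ∀ j, M (τ j) j ≠ 0)
    (heq : ∀ j, D * (M (τ j) j).natDegree + w (τ j) = W + w j)
    (hlt : ∀ i j, i ≠ τ j → M i j ≠ 0 → D * (M i j).natDegree + w i < W + w j) :
    D * M.det.natDegree = Fintype.card ι * W := by
  have sum_weighted (σ : Equiv.Perm ι) (hσ : ∀ j, M (σ j) j ≠ 0) :
      ∑ j, (D * (M (σ j) j).natDegree + w (σ j)) =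
        D * (∏ j, M (σ j) j).natDegree + ∑ j, w j := by
    rw [natDegree_prod _ _ fun j _ => hσ j, Finset.sum_add_distrib, Equiv.sum_comp σ w,
      Finset.mul_sum]
  have sum_const : ∑ j, (W + w j) = Fintype.card ι * W + ∑ j, w j := by
    simp [Finset.sum_add_distrib]
  have natDegree_dominant : D * (∏ j, M (τ j) j).natDegree = Fintype.card ι * W := by
    have := Finset.sum_congr rfl fun j (_ : j ∈ Finset.univ) => heq j
    rw [sum_weighted τ hne, sum_const] at this
    exact Nat.add_right_cancel this
  have prod_ne_zero : ∏ j, M (τ j) j ≠ 0 := Finset.prod_ne_zero_iff.2 fun j _ => hne j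
  rw [← natDegree_dominant, natDegree_eq_of_degree_eq
    (degree_det_eq_of_forall_degree_lt M τ (fun σ hστ => ?_) prod_ne_zero)]
  by_cases hσ : ∏ j, M (σ j) j = 0
  · rw [hσ, degree_zero]
    exact bot_lt_iff_ne_bot.2 (degree_ne_bot.2 prod_ne_zero)
  have entry_ne_zero (j : ι) : M (σ j) j ≠ 0 := Finset.prod_ne_zero_iff.1 hσ j (Finset.mem_univ j)
  obtain ⟨k, hk⟩ : ∃ k, σ k ≠ τ k := by
    by_contra! h
    exact hστ (Equiv.ext h)
  have sum_lt : ∑ j, (D * (M (σ j) j).natDegree + w (σ j)) < ∑ j, (W + w j) := by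
    refine Finset.sum_lt_sum (fun j _ => ?_) ⟨k, Finset.mem_univ k, hlt _ _ hk (entry_ne_zero k)⟩
    by_cases hj : σ j = τ j
    · rw [hj, heq]
    · exact (hlt _ _ hj (entry_ne_zero j)).le
  rw [sum_weighted σ entry_ne_zero, sum_const, ← natDegree_dominant] at sum_lt
  exact degree_lt_degree (lt_of_mul_lt_mul_left (Nat.lt_of_add_lt_add_right sum_lt) D.zero_le)

end Degree

section Norm

/-- The pole order at infinity of the function `p(x) y ^ i` on the curve `y ^ d = f(x)`, where
`deg f = n` is coprime to `d`: there `x` has a pole of order `d` and `y` one of order `n`. -/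
def poleOrder {R : Type*} [Semiring R] (d n : ℕ) (p : R[X]) (i : ℕ) : ℕ :=
  d * p.natDegree + n * i

lemma eq_of_poleOrder_eq {R : Type*} [Semiring R] {d n : ℕ} (hcop : n.Coprime d) {p q : R[X]}
    {i j : Fin d} (h : poleOrder d n p i = poleOrder d n q j) : i = j := by
  have hmod : n * (i : ℕ) ≡ n * (j : ℕ) [MOD d] := by
    simpa [poleOrder, Nat.ModEq] using congrArg (· % d) h
  exact Fin.ext ((hmod.cancel_left_of_coprime hcop.symm).eq_of_lt_of_lt i.2 j.2)

variable {R A : Type*} [CommRing R] [CommRing A] [Algebra R[X] A] {d : ℕ} [NeZero d]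
  {f : R[X]} {y : A} (b : Module.Basis (Fin d) R[X] A)

lemma leftMulMatrix_apply_of_pow_eq (hy : y ^ d = algebraMap R[X] A f)
    (hb : ∀ i, b i = y ^ (i : ℕ)) (g : A) (i j : Fin d) :
    Algebra.leftMulMatrix b g i j =
      b.repr g (i - j) * f ^ ((((i - j : Fin d) : ℕ) + j) / d) := by
  have mul_basis :
      g * b j = ∑ i, (b.repr g (i - j) * f ^ ((((i - j : Fin d) : ℕ) + j) / d)) • b i := by
    rw [← Equiv.sum_comp (Equiv.addRight j)]
    conv_lhs => rw [← b.sum_repr g, Finset.sum_mul]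
    refine Finset.sum_congr rfl fun i _ => ?_
    simp only [Equiv.coe_addRight, add_sub_cancel_right, hb, Algebra.smul_def, map_mul, map_pow,
      ← hy, mul_assoc]
    rw [← pow_add, ← pow_mul, ← pow_add, Fin.val_add, Nat.div_add_mod]
  rw [Algebra.leftMulMatrix_eq_repr_mul, mul_basis, b.repr_sum_self]

variable [IsDomain R]

lemma mul_natDegree_leftMulMatrix_add (hf : f ≠ 0) (hy : y ^ d = algebraMap R[X] A f)
    (hb : ∀ i, b i = y ^ (i : ℕ)) {g : A} {i j : Fin d} (hij : b.repr g (i - j) ≠ 0) :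
    d * (Algebra.leftMulMatrix b g i j).natDegree + f.natDegree * i =
      poleOrder d f.natDegree (b.repr g (i - j)) (i - j : Fin d) + f.natDegree * j := by
  have val_eq := Nat.div_add_mod (((i - j : Fin d) : ℕ) + j) d
  rw [← Fin.val_add, sub_add_cancel] at val_eq
  rw [leftMulMatrix_apply_of_pow_eq b hy hb, natDegree_mul hij (pow_ne_zero _ hf), natDegree_pow,
    poleOrder]
  linear_combination f.natDegree * val_eq

lemma natDegree_norm_eq_poleOrder (hf : f ≠ 0) (hy : y ^ d = algebraMap R[X] A f)
    (hb : ∀ i, b i = y ^ (i : ℕ)) {g : A} {k : Fin d} (hk : b.repr g k ≠ 0)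
    (hlt : ∀ i, i ≠ k → b.repr g i ≠ 0 →
      poleOrder d f.natDegree (b.repr g i) i < poleOrder d f.natDegree (b.repr g k) k) :
    (Algebra.norm R[X] g).natDegree = poleOrder d f.natDegree (b.repr g k) k := by
  have weighted {i j : Fin d} (hij : b.repr g (i - j) ≠ 0) :=
    mul_natDegree_leftMulMatrix_add b hf hy hb hij
  rw [Algebra.norm_eq_matrix_det b]
  refine Nat.eq_of_mul_eq_mul_left (NeZero.pos d) ((mul_natDegree_det_of_weights
    (Algebra.leftMulMatrix b g) (Equiv.addLeft k) (fun i => f.natDegree * i) d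
    (poleOrder d f.natDegree (b.repr g k) k) ?_ ?_ ?_).trans (by rw [Fintype.card_fin]))
  · intro j
    simpa [leftMulMatrix_apply_of_pow_eq b hy hb] using ⟨hk, fun h => absurd h hf⟩
  · intro j
    simpa using weighted (i := k + j) (j := j) (by simpa using hk)
  · intro i j hij hM
    have repr_ne_zero : b.repr g (i - j) ≠ 0 := by
      rw [leftMulMatrix_apply_of_pow_eq b hy hb] at hM
      exact left_ne_zero_of_mul hM
    have sub_ne : i - j ≠ k := by
      rintro rfl
      simp at hij
    rw [weighted repr_ne_zero]
    exact Nat.add_lt_add_right (hlt _ sub_ne repr_ne_zero) _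

theorem natDegree_norm_eq_sup (hcop : f.natDegree.Coprime d) (hf : f ≠ 0)
    (hy : y ^ d = algebraMap R[X] A f) (hb : ∀ i, b i = y ^ (i : ℕ)) (g : A) :
    (Algebra.norm R[X] g).natDegree =
      (b.repr g).support.sup fun i => poleOrder d f.natDegree (b.repr g i) i := by
  obtain rfl | hg := eq_or_ne g 0
  · have : Nontrivial A := b.repr.toEquiv.nontrivial
    have : Module.Free R[X] A := .of_basis b
    have : Module.Finite R[X] A := .of_basis b
    simp
  have support_nonempty : (b.repr g).support.Nonempty := by simpa using hg
  obtain ⟨k, hk, hsup⟩ := Finset.exists_mem_eq_sup _ support_nonempty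
    fun i => poleOrder d f.natDegree (b.repr g i) i
  rw [hsup]
  refine natDegree_norm_eq_poleOrder b hf hy hb (Finsupp.mem_support_iff.1 hk) fun i hik hi => ?_
  refine lt_of_le_of_ne ?_ fun h => hik (eq_of_poleOrder_eq hcop h)
  rw [← hsup]
  exact Finset.le_sup (f := fun i => poleOrder d f.natDegree (b.repr g i) i)
    (Finsupp.mem_support_iff.2 hi)

lemma mem_range_algebraMap_of_natDegree_norm_lt (hcop : f.natDegree.Coprime d)
    (hy : y ^ d = algebraMap R[X] A f) (hb : ∀ i, b i = y ^ (i : ℕ)) {g : A}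
    (hg : (Algebra.norm R[X] g).natDegree < f.natDegree) : g ∈ (algebraMap R[X] A).range := by
  have hf : f ≠ 0 := ne_zero_of_natDegree_gt hg
  have repr_eq_zero (k : Fin d) (hk : k ≠ 0) : b.repr g k = 0 := by
    by_contra hgk
    have pole_le := Finset.le_sup (f := fun i => poleOrder d f.natDegree (b.repr g i) i)
      (Finsupp.mem_support_iff.2 hgk)
    rw [← natDegree_norm_eq_sup b hcop hf hy hb] at pole_le
    have : f.natDegree * 1 ≤ f.natDegree * k :=
      Nat.mul_le_mul_left _ (Nat.one_le_iff_ne_zero.2 (Fin.val_ne_zero_iff.2 hk))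
    simp only [poleOrder] at pole_le
    omega
  refine ⟨b.repr g 0, ?_⟩
  conv_rhs => rw [← b.sum_repr g, Finset.sum_eq_single 0
    (fun k _ hk => by rw [repr_eq_zero k hk, zero_smul]) (by simp), hb]
  simp [Algebra.smul_def]

end Norm

section Dedekind

variable {A : Type*} [CommRing A] [IsDedekindDomain A] {P : Ideal A} [P.IsPrime]
  {K : Type*} [Field K] [Algebra K A]

lemma exists_smul_sub_mem_pow_succ (hP : P ≠ ⊥) (hK : Function.Surjective (algebraMap K (A ⧸ P)))
    {m : ℕ} {t z : A} (ht : t ∈ P ^ m) (ht' : t ∉ P ^ (m + 1)) (hz : z ∈ P ^ m) :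
    ∃ k : K, k • t - z ∈ P ^ (m + 1) := by
  obtain ⟨u, e, he, rfl⟩ := Ideal.exists_mul_add_mem_pow_succ hP t z ht ht' hz
  obtain ⟨k, hk⟩ := hK (Ideal.Quotient.mk P u)
  have diff_mem : algebraMap K A k - u ∈ P := (Ideal.Quotient.mk_eq_mk_iff_sub_mem _ _).1 hk
  have rearrange : k • t - (t * u + e) = t * (algebraMap K A k - u) - e := by
    rw [Algebra.smul_def]
    ring
  exact ⟨k, rearrange ▸ sub_mem (pow_succ P m ▸ Ideal.mul_mem_mul ht diff_mem) he⟩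

lemma length_quotient_pow_of_surjective (hP : P ≠ ⊥)
    (hK : Function.Surjective (algebraMap K (A ⧸ P))) (m : ℕ) :
    Module.length K (A ⧸ P ^ m) = m := by
  induction m with
  | zero =>
    have : Subsingleton (A ⧸ P ^ 0) :=
      Ideal.Quotient.subsingleton_iff.2 (by rw [pow_zero, Ideal.one_eq_top])
    simp
  | succ m ih =>
    obtain ⟨t, ht, ht'⟩ := P.exists_mem_pow_notMem_pow_succ hP Ideal.IsPrime.ne_top' m
    have pow_le : P ^ (m + 1) ≤ P ^ m := Ideal.pow_le_pow_right m.le_succ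
    let smulT : K →ₗ[K] A ⧸ P ^ (m + 1) :=
      LinearMap.toSpanSingleton K _ (Ideal.Quotient.mk (P ^ (m + 1)) t)
    let proj : A ⧸ P ^ (m + 1) →ₗ[K] A ⧸ P ^ m := (Ideal.Quotient.factorₐ K pow_le).toLinearMap
    have smulT_injective : Function.Injective smulT := LinearMap.ker_eq_bot.1 <|
      LinearMap.ker_toSpanSingleton K (mt Ideal.Quotient.eq_zero_iff_mem.1 ht')
    have exact_smulT_proj : Function.Exact smulT proj := by
      intro z
      obtain ⟨z, rfl⟩ := Ideal.Quotient.mk_surjective z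
      change Ideal.Quotient.mk (P ^ m) z = 0 ↔ ∃ k : K, Ideal.Quotient.mk (P ^ (m + 1)) (k • t) = _
      simp only [Ideal.Quotient.eq_zero_iff_mem, Ideal.Quotient.mk_eq_mk_iff_sub_mem]
      refine ⟨exists_smul_sub_mem_pow_succ hP hK ht ht', fun ⟨k, hk⟩ => ?_⟩
      exact (Submodule.sub_mem_iff_right _ (Submodule.smul_of_tower_mem _ k ht)).1 (pow_le hk)
    rw [Module.length_eq_add_of_exact smulT proj smulT_injective
      (Ideal.Quotient.factor_surjective pow_le) exact_smulT_proj, ih, Module.length_eq_one]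
    push_cast
    ring

lemma finrank_quotient_pow_of_surjective (hP : P ≠ ⊥)
    (hK : Function.Surjective (algebraMap K (A ⧸ P))) (m : ℕ) :
    Module.finrank K (A ⧸ P ^ m) = m := by
  simpa [Module.length_eq_rank, Module.finrank] using
    congrArg ENat.toNat (length_quotient_pow_of_surjective hP hK m)

lemma irreducible_of_isLeast_isPrincipal_pow (hP : P ≠ ⊥) {m : ℕ}
    (hm : IsLeast {k : ℕ | 0 < k ∧ (P ^ k).IsPrincipal} m) {g : A}
    (hg : P ^ m = Ideal.span {g}) : Irreducible g := by
  refine ⟨fun hunit => ?_, fun r s hrs => ?_⟩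
  · rw [Ideal.span_singleton_eq_top.2 hunit] at hg
    exact Ideal.IsPrime.ne_top' (top_le_iff.1 (hg ▸ Ideal.pow_le_self hm.1.1.ne'))
  have span_r_dvd : Ideal.span {r} ∣ P ^ m :=
    ⟨Ideal.span {s}, by rw [hg, hrs, Ideal.span_singleton_mul_span_singleton]⟩
  obtain ⟨i, him, hi⟩ := (dvd_prime_pow (Ideal.prime_of_isPrime hP inferInstance) m).1 span_r_dvd
  rw [associated_iff_eq] at hi
  obtain rfl | hi0 := i.eq_zero_or_pos
  · exact .inl (Ideal.span_singleton_eq_top.1 (by rw [hi, pow_zero, Ideal.one_eq_top]))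
  right
  obtain rfl : i = m := le_antisymm him (hm.2 ⟨hi0, hi ▸ ⟨r, rfl⟩⟩)
  have hr : r ≠ 0 := by
    rintro rfl
    exact pow_ne_zero i hP (by simpa using hi.symm)
  have associated_mul : Associated (r * s) r := by
    rw [← hrs, ← Ideal.span_singleton_eq_span_singleton, ← hg, hi]
  exact isUnit_of_associated_mul associated_mul hr

end Dedekind

section CurveRing

variable {K : Type*} [Field K] {d : ℕ} {f : K[X]}

lemma CurveRing.root_pow :
    AdjoinRoot.root (X ^ d - C f) ^ d = algebraMap K[X] (CurveRing K d f) f := by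
  have := AdjoinRoot.eval₂_root ((X : K[X][X]) ^ d - C f)
  rwa [eval₂_sub, eval₂_pow, eval₂_X, eval₂_C, sub_eq_zero] at this

lemma mk_mem_ptIdeal_iff {a c : K} (hP : c ^ d = f.eval a) {q : K[X][X]} :
    AdjoinRoot.mk (X ^ d - C f) q ∈ ptIdeal d f a c ↔ q.evalEval a c = 0 := by
  rw [evalEval, ← mem_span_C_X_sub_C_X_sub_C_iff_eval_eval_eq_zero]
  have curve_le : Ideal.span {(X : K[X][X]) ^ d - C f} ≤
      Ideal.span {C (X - C a), X - C (C c)} := by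
    rw [Ideal.span_singleton_le_iff_mem, mem_span_C_X_sub_C_X_sub_C_iff_eval_eval_eq_zero]
    simp [hP]
  have ptIdeal_eq_map : ptIdeal d f a c =
      (Ideal.span {C (X - C a), X - C (C c)}).map (AdjoinRoot.mk ((X : K[X][X]) ^ d - C f)) := by
    rw [Ideal.map_span, Set.image_pair, map_sub (AdjoinRoot.mk _) X, AdjoinRoot.mk_C,
      AdjoinRoot.mk_C, AdjoinRoot.mk_X, ptIdeal]
  rw [ptIdeal_eq_map]
  exact Ideal.mem_quotient_iff_mem curve_le

lemma algebraMap_mem_ptIdeal_iff {a c : K} (hP : c ^ d = f.eval a) {p : K[X]} :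
    algebraMap K[X] (CurveRing K d f) p ∈ ptIdeal d f a c ↔ p.eval a = 0 := by
  simpa [evalEval_C] using mk_mem_ptIdeal_iff hP (q := C p)

lemma isPrime_ptIdeal {a c : K} (hP : c ^ d = f.eval a) : (ptIdeal d f a c).IsPrime := by
  refine ⟨(Ideal.ne_top_iff_one _).2 fun h => ?_, fun {r s} h => ?_⟩
  · rw [← map_one (AdjoinRoot.mk _), mk_mem_ptIdeal_iff hP] at h
    simp at h
  · obtain ⟨p, rfl⟩ := AdjoinRoot.mk_surjective r
    obtain ⟨q, rfl⟩ := AdjoinRoot.mk_surjective s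
    rw [← map_mul, mk_mem_ptIdeal_iff hP, evalEval_mul, mul_eq_zero] at h
    simpa only [mk_mem_ptIdeal_iff hP] using h

lemma algebraMap_quotient_ptIdeal_surjective {a c : K} (hP : c ^ d = f.eval a) :
    Function.Surjective (algebraMap K (CurveRing K d f ⧸ ptIdeal d f a c)) := by
  intro z
  obtain ⟨z, rfl⟩ := Ideal.Quotient.mk_surjective z
  obtain ⟨q, rfl⟩ := AdjoinRoot.mk_surjective z
  refine ⟨q.evalEval a c, ((Ideal.Quotient.mk_eq_mk_iff_sub_mem
    (AdjoinRoot.mk _ (C (C (q.evalEval a c)))) _).2 ?_)⟩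
  rw [← map_sub, mk_mem_ptIdeal_iff hP]
  simp

variable [NeZero d]

/-- The `K[X]`-basis `1, y, …, y ^ (d - 1)` of the coordinate ring. -/
noncomputable def CurveRing.basis (K : Type*) [Field K] (d : ℕ) [NeZero d] (f : K[X]) :
    Module.Basis (Fin d) K[X] (CurveRing K d f) :=
  (AdjoinRoot.powerBasis' (monic_X_pow_sub_C f (NeZero.ne d))).basis.reindex
    (finCongr natDegree_X_pow_sub_C)

lemma CurveRing.basis_apply (i : Fin d) :
    CurveRing.basis K d f i = AdjoinRoot.root (X ^ d - C f) ^ (i : ℕ) := by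
  simp only [CurveRing.basis, Module.Basis.reindex_apply, PowerBasis.basis_eq_pow]
  rfl

lemma ptIdeal_ne_bot (a c : K) : ptIdeal d f a c ≠ ⊥ := by
  refine ne_of_mem_of_not_mem' (Ideal.subset_span (Set.mem_insert _ _)) fun h => ?_
  have degree_ne_zero : ((X : K[X][X]) ^ d - C f).degree ≠ 0 := by
    rw [degree_X_pow_sub_C (NeZero.pos d)]
    exact_mod_cast NeZero.ne d
  exact X_sub_C_ne_zero a
    ((map_eq_zero_iff _ (AdjoinRoot.of.injective_of_degree_ne_zero degree_ne_zero)).1 h)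

lemma natDegree_norm_eq_of_ptIdeal_pow_eq_span [IsDedekindDomain (CurveRing K d f)] {a c : K}
    (hP : c ^ d = f.eval a) {m : ℕ} {g : CurveRing K d f}
    (hg : ptIdeal d f a c ^ m = Ideal.span {g}) : (Algebra.norm K[X] g).natDegree = m := by
  have := isPrime_ptIdeal hP
  have hg0 : g ≠ 0 := by
    rintro rfl
    exact pow_ne_zero m (ptIdeal_ne_bot a c) (by simpa using hg)
  rw [← finrank_quotient_span_eq_natDegree_norm (F := K) (CurveRing.basis K d f) hg0, ← hg]
  exact finrank_quotient_pow_of_surjective (ptIdeal_ne_bot a c)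
    (algebraMap_quotient_ptIdeal_surjective hP) m

lemma natDegree_norm_algebraMap (p : K[X]) :
    (Algebra.norm K[X] (algebraMap K[X] (CurveRing K d f) p)).natDegree = d * p.natDegree := by
  rw [Algebra.norm_algebraMap_of_basis (CurveRing.basis K d f), natDegree_pow, Fintype.card_fin]

end CurveRing

theorem stmt_0_general {K : Type*} [Field K] (d : ℕ) [NeZero d] (f : K[X])
    (hcop : f.natDegree.Coprime d) [IsDedekindDomain (CurveRing K d f)]
    (a c : K) (hP : c ^ d = f.eval a) (m : ℕ) (horder : IsTorsionOfOrder d f a c m) :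
    m = d ∨ f.natDegree ≤ m := by
  refine or_iff_not_imp_right.2 fun hmn => ?_
  have := isPrime_ptIdeal hP
  obtain ⟨g, hg⟩ : ∃ g, ptIdeal d f a c ^ m = Ideal.span {g} := horder.1.2.principal
  have norm_g : (Algebra.norm K[X] g).natDegree = m :=
    natDegree_norm_eq_of_ptIdeal_pow_eq_span hP hg
  obtain ⟨v, rfl⟩ : g ∈ (algebraMap K[X] (CurveRing K d f)).range :=
    mem_range_algebraMap_of_natDegree_norm_lt (CurveRing.basis K d f) hcop
      CurveRing.root_pow CurveRing.basis_apply (norm_g.trans_lt (not_le.1 hmn))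
  have v_root : v.IsRoot a := (algebraMap_mem_ptIdeal_iff hP).1 <|
    Ideal.pow_le_self horder.1.1.ne' (hg ▸ Ideal.mem_span_singleton_self _)
  have not_isUnit : ¬ IsUnit (algebraMap K[X] (CurveRing K d f) (X - C a)) := fun h =>
    Ideal.IsPrime.ne_top' <| Ideal.eq_top_of_isUnit_mem _
      ((algebraMap_mem_ptIdeal_iff hP).2 (by simp)) h
  have v_irreducible := irreducible_of_isLeast_isPrincipal_pow (ptIdeal_ne_bot a c) horder hg
  have v_associated : Associated (algebraMap K[X] (CurveRing K d f) v) (algebraMap _ _ (X - C a)) :=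
    (v_irreducible.dvd_iff.1 (map_dvd _ (dvd_iff_isRoot.2 v_root))).resolve_left not_isUnit
  rw [Ideal.span_singleton_eq_span_singleton.2 v_associated] at hg
  rw [← natDegree_norm_eq_of_ptIdeal_pow_eq_span hP hg, natDegree_norm_algebraMap,
    natDegree_X_sub_C, mul_one]

theorem stmt_0 {K : Type*} [Field K] [IsAlgClosed K] (d n : ℕ)
    (hd : 2 ≤ d) (hdn : d < n) (hgcd : Nat.gcd n d = 1)
    (hchar : ¬ (ringChar K ∣ d))
    (f : K[X]) (hmonic : f.Monic) (hdeg : f.natDegree = n) (hsqf : Squarefree f)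
    (hDed : IsDedekindDomain (CurveRing K d f))
    (a c : K) (hP : c ^ d = f.eval a)
    (m : ℕ) (hm : 1 < m)
    (horder : IsTorsionOfOrder d f a c m) :
    m = d ∨ n ≤ m := by
  have : NeZero d := ⟨by omega⟩
  subst hdeg
  exact stmt_0_general d f hgcd a c hP m horder
end

section
/- A K-point P = (a,c) of the affine curve y^d = f(x) is a torsion point of order exactly d (that is, d is the least positive integer m such that m_P^m is a principal ideal of A) if and only if c = 0, i.e., if and only if a is one of the n roots of f. In particular, the curve contains exactly n torsion points of order d, namely the points (w,0) for the n distinct roots w of f. -/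
open Polynomial

/-!
Expand a function `u` on the curve as `∑ pᵢ(x) yⁱ` with `i < d`, and write `n = deg f`. As `n` is
prime to `d`, the numbers `d · deg pᵢ + n · i` are distinct, so their maximum is the pole order of
`u` for any valuation above `x = ∞`. Hence the pole order is additive, is preserved by the
automorphisms `y ↦ ζ y` with `ζ ^ d = 1`, and is at least `n` unless `u` lies in `K[x]`.

Let `P = (a, c)` and `m_P ^ k = (u)` with `k < n`.

If `c = 0`, then `m_P ^ d = (x - a)`, so comparing `u ^ d` with `(x - a) ^ k` shows that `u` has
pole order `k`. Therefore `u` lies in `K[x]` and `d ∣ k`.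

If `c ≠ 0`, extend scalars so that `K` contains all `d`-th roots of unity. The translates of `m_P`
under `y ↦ ζ y` are pairwise coprime and all contain `x - a`, so the product of the conjugates of
`u` divides `(x - a) ^ k`, and `u` has pole order at most `k < n`. Again `u` lies in `K[x]`, so
`m_P ^ k` is invariant under `y ↦ ζ y`, although it is coprime to its translates; thus `k = 0`.
-/

universe u

section Preliminaries

theorem exists_valuation_isTrivialOn_one_lt {K L : Type*} [Field K] [Field L] [Algebra K L] {t : L}
    (ht : Transcendental K t) : ∃ V : ValuationSubring L, V.valuation.IsTrivialOn K ∧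
      1 < V.valuation t := by
  have ht' : t ∉ (integralClosure K L).toSubring := fun h ↦ ht (IsIntegral.isAlgebraic h)
  obtain ⟨V, hKV, htV⟩ := Subring.exists_le_valuationSubring_of_isIntegrallyClosedIn ht'
  have valuation_le_one (b : K) : V.valuation (algebraMap K L b) ≤ 1 :=
    (V.valuation_le_one_iff _).2 (hKV (algebraMap_mem (integralClosure K L) b))
  refine ⟨V, ⟨fun b hb ↦ (valuation_le_one b).antisymm ?_⟩, ?_⟩
  · have hb' : 0 < V.valuation (algebraMap K L b) := by simpa [Valuation.pos_iff] using hb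
    simpa [inv_le_one₀ hb'] using valuation_le_one b⁻¹
  · rwa [← not_le, V.valuation_le_one_iff]

theorem sup_pow_le_sup_pow {R : Type*} [CommSemiring R] (I J : Ideal R) (k : ℕ) :
    (I ⊔ J) ^ k ≤ I ⊔ J ^ k := by
  rw [← Ideal.add_eq_sup, ← Ideal.add_eq_sup, add_pow, Ideal.sum_eq_sup]
  refine Finset.sup_le fun m _ ↦ ?_
  obtain rfl | hm := eq_or_ne m 0
  · rw [tsub_zero]
    exact Ideal.mul_le_left.trans (Ideal.mul_le_right.trans le_sup_right)
  · exact Ideal.mul_le_left.trans (Ideal.mul_le_left.trans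
      ((Ideal.pow_le_self hm).trans le_sup_left))

theorem span_pair_pow_eq_span_singleton {R : Type*} [CommRing R] {x y g : R} {d : ℕ} (hd : d ≠ 0)
    (hy : y ^ d = x * g) (hxg : IsCoprime x g) :
    Ideal.span {x, y} ^ d = Ideal.span {x} := by
  apply le_antisymm
  · rw [Ideal.span_insert]
    refine (sup_pow_le_sup_pow _ _ d).trans (sup_le le_rfl ?_)
    rw [Ideal.span_singleton_pow, Ideal.span_singleton_le_span_singleton, hy]
    exact dvd_mul_right x g
  · rw [Ideal.span_singleton_le_iff_mem]
    have hxI : x ∈ Ideal.span {x, y} := Ideal.subset_span (by simp)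
    have hyI : y ∈ Ideal.span {x, y} := Ideal.subset_span (by simp)
    obtain ⟨r, t, hrt⟩ : IsCoprime (x ^ (d - 1)) g := hxg.pow_left
    have hmem : r * x ^ d + t * y ^ d ∈ Ideal.span {x, y} ^ d :=
      add_mem (Ideal.mul_mem_left _ _ (Ideal.pow_mem_pow hxI d))
        (Ideal.mul_mem_left _ _ (Ideal.pow_mem_pow hyI d))
    have hx : r * x ^ d + t * y ^ d = x := by
      rw [hy, ← mul_pow_sub_one hd x]
      linear_combination x * hrt
    rwa [hx] at hmem

theorem eq_of_mul_add_mul_eq {d n i j a b : ℕ} (hnd : n.Coprime d) (hi : i < d) (hj : j < d)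
    (h : d * a + n * i = d * b + n * j) : i = j := by
  have hmod : n * i ≡ n * j [MOD d] := by simpa [Nat.ModEq] using congrArg (· % d) h
  exact (Nat.ModEq.cancel_left_of_coprime hnd.symm hmod).eq_of_lt_of_lt hi hj

end Preliminaries

namespace CurveRing

variable {K : Type u} [Field K] {d : ℕ} {f : K[X]}

theorem root_pow_s1 (d : ℕ) (f : K[X]) :
    (AdjoinRoot.root _ : CurveRing K d f) ^ d = AdjoinRoot.of _ f := by
  simpa [sub_eq_zero] using AdjoinRoot.eval₂_root ((X : K[X][X]) ^ d - C f)

section Valuation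

-- Extend the place `x = ∞` to an algebraic closure of `K(x)` and restrict it along a choice of `y`.
theorem exists_valuation [NeZero d] :
    ∃ (Γ : Type u) (_ : LinearOrderedCommGroupWithZero Γ) (v : Valuation (CurveRing K d f) Γ),
      v.IsTrivialOn K ∧ 1 < v (AdjoinRoot.of _ X) := by
  let L := AlgebraicClosure (FractionRing K[X])
  have : FaithfulSMul K[X] L := FaithfulSMul.trans K[X] (FractionRing K[X]) L
  have hX : Transcendental K (algebraMap K[X] L X) :=
    (transcendental_algebraMap_iff (FaithfulSMul.algebraMap_injective K[X] L)).2
      (transcendental_X K)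
  obtain ⟨V, hVK, hVX⟩ := exists_valuation_isTrivialOn_one_lt hX
  obtain ⟨y, hy⟩ := IsAlgClosed.exists_pow_nat_eq (algebraMap K[X] L f) (NeZero.pos d)
  let φ : CurveRing K d f →+* L := AdjoinRoot.lift (algebraMap K[X] L) y (by simp [hy])
  refine ⟨V.ValueGroup, inferInstance, V.valuation.comap φ, ⟨fun b hb ↦ ?_⟩, ?_⟩
  · have hφ : φ (algebraMap K _ b) = algebraMap K L b := by
      rw [AdjoinRoot.algebraMap_eq', RingHom.comp_apply, AdjoinRoot.lift_of,
        ← IsScalarTower.algebraMap_apply]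
    rw [Valuation.comap_apply, hφ, hVK.eq_one b hb]
  · rwa [Valuation.comap_apply, AdjoinRoot.lift_of]

variable {Γ : Type*} [LinearOrderedCommGroupWithZero Γ] {v : Valuation (CurveRing K d f) Γ}
  [v.IsTrivialOn K]

theorem valuation_of (hv : 1 < v (AdjoinRoot.of _ X)) {q : K[X]} (hq : q ≠ 0) :
    v (AdjoinRoot.of _ q) = v (AdjoinRoot.of _ X) ^ q.natDegree := by
  rw [← valuation_aeval_eq_valuation_X_pow_natDegree_of_one_lt_valuation_X _ hv hq,
    ← AdjoinRoot.algebraMap_eq, aeval_algebraMap_apply, aeval_X_left_apply]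

theorem valuation_monomial_pow (hv : 1 < v (AdjoinRoot.of _ X)) (hf : f ≠ 0) {q : K[X]}
    (hq : q ≠ 0) (i : ℕ) : v (AdjoinRoot.of _ q * AdjoinRoot.root _ ^ i) ^ d =
      v (AdjoinRoot.of _ X) ^ (d * q.natDegree + f.natDegree * i) := by
  have hroot : v (AdjoinRoot.root _) ^ d = v (AdjoinRoot.of _ X) ^ f.natDegree := by
    rw [← map_pow, root_pow_s1, valuation_of hv hf]
  rw [map_mul, map_pow, valuation_of hv hq, mul_pow, pow_right_comm _ i, hroot, pow_add, ← pow_mul,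
    ← pow_mul, mul_comm d]

end Valuation

section PoleOrder

variable [NeZero d]

/-- The unique representative of an element of `K[X,Y]/(Y^d − f(X))` of degree less than `d`
in `Y`. -/
noncomputable def normalForm : CurveRing K d f →ₗ[K[X]] K[X][X] :=
  AdjoinRoot.modByMonicHom (monic_X_pow_sub_C f (NeZero.ne d))

theorem mk_normalForm (u : CurveRing K d f) :
    AdjoinRoot.mk ((X : K[X][X]) ^ d - C f) (normalForm u) = u :=
  AdjoinRoot.mk_leftInverse _ u

theorem normalForm_ne_zero {u : CurveRing K d f} (hu : u ≠ 0) : normalForm u ≠ 0 := by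
  intro h
  rw [← mk_normalForm u, h, map_zero] at hu
  exact hu rfl

theorem lt_of_mem_support_normalForm {u : CurveRing K d f} {i : ℕ}
    (hi : i ∈ (normalForm u).support) : i < d := by
  obtain ⟨p, rfl⟩ := AdjoinRoot.mk_surjective u
  have hdeg : (normalForm (d := d) (f := f) (AdjoinRoot.mk _ p)).degree < d := by
    rw [normalForm, AdjoinRoot.modByMonicHom_mk, ← degree_X_pow_sub_C (NeZero.pos d) f]
    exact degree_modByMonic_lt p (monic_X_pow_sub_C f (NeZero.ne d))
  exact_mod_cast (le_degree_of_mem_supp i hi).trans_lt hdeg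

theorem sum_normalForm (u : CurveRing K d f) :
    ∑ i ∈ (normalForm u).support,
      AdjoinRoot.of _ ((normalForm u).coeff i) * AdjoinRoot.root _ ^ i = u := by
  conv_rhs => rw [← mk_normalForm u, (normalForm u).as_sum_support_C_mul_X_pow, map_sum]
  simp only [map_mul, map_pow, AdjoinRoot.mk_C, AdjoinRoot.mk_X]

/-- The order of the pole at infinity of a nonzero regular function on the affine curve
`y^d = f(x)`, with `deg f` prime to `d`: the functions `x` and `y` have poles of order `d` and
`deg f` there. By convention `poleOrder 0 = 0`. -/
noncomputable def poleOrder (u : CurveRing K d f) : ℕ :=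
  (normalForm u).support.sup fun i ↦ d * ((normalForm u).coeff i).natDegree + f.natDegree * i

theorem exists_of_eq_of_poleOrder_lt {u : CurveRing K d f} (hu : poleOrder u < f.natDegree) :
    ∃ q : K[X], AdjoinRoot.of _ q = u := by
  have natDegree_eq_zero : (normalForm u).natDegree = 0 := by
    by_contra h
    have hmem : (normalForm u).natDegree ∈ (normalForm u).support :=
      natDegree_mem_support_of_nonzero (ne_zero_of_natDegree_gt (Nat.pos_of_ne_zero h))
    have hle : _ ≤ poleOrder u := Finset.le_sup hmem
    have := Nat.le_mul_of_pos_right f.natDegree (Nat.pos_of_ne_zero h)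
    omega
  refine ⟨(normalForm u).coeff 0, ?_⟩
  rw [← AdjoinRoot.mk_C, ← eq_C_of_natDegree_eq_zero natDegree_eq_zero, mk_normalForm]

section Valuation

variable {Γ : Type*} [LinearOrderedCommGroupWithZero Γ] {v : Valuation (CurveRing K d f) Γ}
  [v.IsTrivialOn K]

theorem valuation_pow_eq (hf : f ≠ 0) (hfd : f.natDegree.Coprime d)
    (hv : 1 < v (AdjoinRoot.of _ X)) {u : CurveRing K d f} (hu : u ≠ 0) :
    v u ^ d = v (AdjoinRoot.of _ X) ^ poleOrder u := by
  classical
  set p := normalForm u with hp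
  have valuation_term {i : ℕ} (hi : i ∈ p.support) :=
    valuation_monomial_pow hv hf (mem_support_iff.1 hi) i
  obtain ⟨j, hj, hju⟩ := p.support.exists_mem_eq_sup (support_nonempty.2 (normalForm_ne_zero hu))
    fun i ↦ d * (p.coeff i).natDegree + f.natDegree * i
  -- The exponents `d * deg (p.coeff i) + deg f * i` are distinct modulo `d`, so only the
  -- dominant term contributes to the valuation.
  have term_lt : ∀ i ∈ p.support \ {j}, v (AdjoinRoot.of _ (p.coeff i) * AdjoinRoot.root _ ^ i) <
      v (AdjoinRoot.of _ (p.coeff j) * AdjoinRoot.root _ ^ j) := by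
    intro i hi
    obtain ⟨hi, hij⟩ : i ∈ p.support ∧ i ≠ j := by
      simpa only [Finset.mem_sdiff, Finset.mem_singleton] using hi
    have hle := hju ▸ Finset.le_sup (f := fun i ↦ d * (p.coeff i).natDegree + f.natDegree * i) hi
    refine lt_of_pow_lt_pow_left₀ d zero_le ?_
    rw [valuation_term hi, valuation_term hj]
    refine pow_lt_pow_right₀ hv (hle.lt_of_ne fun h ↦ hij ?_)
    exact eq_of_mul_add_mul_eq hfd (lt_of_mem_support_normalForm hi)
      (lt_of_mem_support_normalForm hj) h
  calc v u ^ d = v (∑ i ∈ p.support, AdjoinRoot.of _ (p.coeff i) * AdjoinRoot.root _ ^ i) ^ d := by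
        rw [hp, sum_normalForm]
    _ = v (AdjoinRoot.of _ (p.coeff j) * AdjoinRoot.root _ ^ j) ^ d := by
        rw [Valuation.map_sum_eq_of_lt v hj term_lt]
    _ = v (AdjoinRoot.of _ X) ^ poleOrder u := by rw [valuation_term hj, ← hju, poleOrder]

theorem poleOrder_eq_of_valuation_pow_eq (hf : f ≠ 0) (hfd : f.natDegree.Coprime d)
    (hv : 1 < v (AdjoinRoot.of _ X)) {u : CurveRing K d f} {N : ℕ}
    (h : v u ^ d = v (AdjoinRoot.of _ X) ^ N) : poleOrder u = N := by
  have hv0 : 0 < v (AdjoinRoot.of _ X) := zero_lt_one.trans hv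
  have hu : u ≠ 0 := by
    rintro rfl
    rw [map_zero, zero_pow (NeZero.ne d)] at h
    exact (pow_pos hv0 N).ne h
  exact pow_right_injective₀ hv0 hv.ne' ((valuation_pow_eq hf hfd hv hu).symm.trans h)

end Valuation

theorem poleOrder_of (hf : f ≠ 0) (hfd : f.natDegree.Coprime d) {q : K[X]} (hq : q ≠ 0) :
    poleOrder (AdjoinRoot.of _ q : CurveRing K d f) = d * q.natDegree := by
  obtain ⟨Γ, _, v, _, hv⟩ := exists_valuation (d := d) (f := f)
  refine poleOrder_eq_of_valuation_pow_eq hf hfd hv ?_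
  rw [valuation_of hv hq, ← pow_mul, mul_comm]

theorem poleOrder_mul (hf : f ≠ 0) (hfd : f.natDegree.Coprime d) {u w : CurveRing K d f}
    (hu : u ≠ 0) (hw : w ≠ 0) : poleOrder (u * w) = poleOrder u + poleOrder w := by
  obtain ⟨Γ, _, v, _, hv⟩ := exists_valuation (d := d) (f := f)
  refine poleOrder_eq_of_valuation_pow_eq hf hfd hv ?_
  rw [map_mul, mul_pow, valuation_pow_eq hf hfd hv hu, valuation_pow_eq hf hfd hv hw, pow_add]

theorem poleOrder_prod (hf : f ≠ 0) (hfd : f.natDegree.Coprime d) {ι : Type*} (s : Finset ι)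
    {u : ι → CurveRing K d f} (hu : ∀ i ∈ s, u i ≠ 0) :
    poleOrder (∏ i ∈ s, u i) = ∑ i ∈ s, poleOrder (u i) := by
  obtain ⟨Γ, _, v, _, hv⟩ := exists_valuation (d := d) (f := f)
  refine poleOrder_eq_of_valuation_pow_eq hf hfd hv ?_
  rw [map_prod, ← Finset.prod_pow, ← Finset.prod_pow_eq_pow_sum]
  exact Finset.prod_congr rfl fun i hi ↦ valuation_pow_eq hf hfd hv (hu i hi)

theorem poleOrder_pow (hf : f ≠ 0) (hfd : f.natDegree.Coprime d) {u : CurveRing K d f}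
    (hu : u ≠ 0) (m : ℕ) : poleOrder (u ^ m) = m * poleOrder u := by
  obtain ⟨Γ, _, v, _, hv⟩ := exists_valuation (d := d) (f := f)
  refine poleOrder_eq_of_valuation_pow_eq hf hfd hv ?_
  rw [map_pow, pow_right_comm, valuation_pow_eq hf hfd hv hu, ← pow_mul, mul_comm]

theorem poleOrder_le_of_dvd (hf : f ≠ 0) (hfd : f.natDegree.Coprime d) {u w : CurveRing K d f}
    (hw : w ≠ 0) (huw : u ∣ w) : poleOrder u ≤ poleOrder w := by
  obtain ⟨t, rfl⟩ := huw
  rw [poleOrder_mul hf hfd (left_ne_zero_of_mul hw) (right_ne_zero_of_mul hw)]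
  exact Nat.le_add_right _ _

theorem of_injective : Function.Injective (AdjoinRoot.of _ : K[X] →+* CurveRing K d f) := by
  refine AdjoinRoot.of.injective_of_degree_ne_zero ?_
  rw [degree_X_pow_sub_C (NeZero.pos d)]
  exact_mod_cast NeZero.ne d

end PoleOrder

section Twist

/-- The endomorphism of the coordinate ring induced by the automorphism `(x, y) ↦ (x, z y)` of the
curve, for a `d`-th root of unity `z`. -/
noncomputable def twist (z : rootsOfUnity d K) : CurveRing K d f →+* CurveRing K d f :=
  AdjoinRoot.lift (AdjoinRoot.of _) (AdjoinRoot.of _ (C ((z : Kˣ) : K)) * AdjoinRoot.root _) (by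
    have hz : ((z : Kˣ) : K) ^ d = 1 := (mem_rootsOfUnity' d _).1 z.2
    simp [mul_pow, root_pow_s1, ← map_pow, hz])

@[simp]
theorem twist_of (z : rootsOfUnity d K) (q : K[X]) :
    twist z (AdjoinRoot.of _ q : CurveRing K d f) = AdjoinRoot.of _ q :=
  AdjoinRoot.lift_of _

@[simp]
theorem twist_root (z : rootsOfUnity d K) : twist z (AdjoinRoot.root _ : CurveRing K d f) =
    AdjoinRoot.of _ (C ((z : Kˣ) : K)) * AdjoinRoot.root _ :=
  AdjoinRoot.lift_root _

theorem poleOrder_twist [NeZero d] (hf : f ≠ 0) (hfd : f.natDegree.Coprime d)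
    (z : rootsOfUnity d K) {u : CurveRing K d f} (hu : u ≠ 0) :
    poleOrder (twist z u) = poleOrder u := by
  obtain ⟨Γ, _, v, hvK, hv⟩ := exists_valuation (d := d) (f := f)
  have : (v.comap (twist z)).IsTrivialOn K := ⟨fun b hb ↦ by
    simpa [AdjoinRoot.algebraMap_eq'] using hvK.eq_one b hb⟩
  refine poleOrder_eq_of_valuation_pow_eq hf hfd hv ?_
  simpa using valuation_pow_eq (v := v.comap (twist z)) hf hfd (by simpa using hv) hu

theorem map_twist_ptIdeal (z : rootsOfUnity d K) (a c : K) :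
    (ptIdeal d f a c).map (twist z) = ptIdeal d f a (((z : Kˣ) : K)⁻¹ * c) := by
  set ζ : K := ((z : Kˣ) : K)
  have hζ : IsUnit (AdjoinRoot.of _ (C ζ) : CurveRing K d f) :=
    ((z : Kˣ).isUnit.map C).map (AdjoinRoot.of _)
  have twist_sub : twist z (AdjoinRoot.root _ - AdjoinRoot.of _ (C c) : CurveRing K d f) =
      AdjoinRoot.of _ (C ζ) * (AdjoinRoot.root _ - AdjoinRoot.of _ (C (ζ⁻¹ * c))) := by
    rw [map_sub, twist_root, twist_of, mul_sub, ← map_mul, ← map_mul,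
      mul_inv_cancel_left₀ (z : Kˣ).ne_zero]
  rw [ptIdeal, Ideal.map_span, Set.image_pair, twist_of, twist_sub, Ideal.span_insert,
    Ideal.span_singleton_mul_left_unit hζ, ← Ideal.span_insert, ptIdeal]

end Twist

section BaseChange

variable {K' : Type*} [Field K'] (φ : K →+* K')

/-- The homomorphism of coordinate rings induced by extending scalars along `φ`. -/
noncomputable def baseChange : CurveRing K d f →+* CurveRing K' d (f.map φ) :=
  AdjoinRoot.map (mapRingHom φ) _ _ (by simp)

theorem map_baseChange_ptIdeal (a c : K) :
    (ptIdeal d f a c).map (baseChange φ) = ptIdeal d (f.map φ) (φ a) (φ c) := by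
  simp [ptIdeal, Ideal.map_span, Set.image_pair, baseChange]

end BaseChange

section PointIdeal

theorem of_X_sub_C_mem_ptIdeal (d : ℕ) (f : K[X]) (a c : K) :
    AdjoinRoot.of _ (X - C a) ∈ ptIdeal d f a c :=
  Ideal.subset_span (Set.mem_insert _ _)

theorem ptIdeal_ne_top {a c : K} (hac : c ^ d = f.eval a) : ptIdeal d f a c ≠ ⊤ := by
  let evalAt : CurveRing K d f →+* K := AdjoinRoot.lift (evalRingHom a) c (by simp [hac])
  have hle : ptIdeal d f a c ≤ RingHom.ker evalAt := by
    rw [ptIdeal, Ideal.span_le]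
    rintro _ (rfl | rfl) <;> simp [evalAt]
  exact ne_top_of_le_ne_top (RingHom.ker_ne_top evalAt) hle

theorem isCoprime_ptIdeal (a : K) {c c' : K} (hcc' : c ≠ c') :
    IsCoprime (ptIdeal d f a c) (ptIdeal d f a c') := by
  let t : CurveRing K d f := AdjoinRoot.of _ (C (c' - c)⁻¹)
  have ht : t * (AdjoinRoot.of _ (C c') - AdjoinRoot.of _ (C c)) = 1 := by
    simp only [t, ← map_sub, ← map_mul, inv_mul_cancel₀ (sub_ne_zero.2 hcc'.symm), map_one]
  refine Ideal.isCoprime_iff_exists.2 ⟨t * (AdjoinRoot.root _ - AdjoinRoot.of _ (C c)), ?_,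
    -t * (AdjoinRoot.root _ - AdjoinRoot.of _ (C c')), ?_, by linear_combination ht⟩
  all_goals exact Ideal.mul_mem_left _ _ (Ideal.subset_span (Set.mem_insert_of_mem _ rfl))

theorem ptIdeal_zero_pow_eq_span (hd : d ≠ 0) (hf : Squarefree f) {a : K} (ha : f.IsRoot a) :
    ptIdeal d f a 0 ^ d = Ideal.span {AdjoinRoot.of _ (X - C a)} := by
  obtain ⟨g, rfl⟩ := dvd_iff_isRoot.2 ha
  have hcop : IsCoprime (X - C a) g := (IsRelPrime.of_squarefree_mul hf).isCoprime
  rw [ptIdeal, map_zero, map_zero, sub_zero]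
  exact span_pair_pow_eq_span_singleton hd (by rw [root_pow_s1, map_mul]) (hcop.map _)

theorem of_X_sub_C_mem_prod_map_twist [Fintype (rootsOfUnity d K)] (a : K) {c : K} (hc : c ≠ 0) :
    AdjoinRoot.of _ (X - C a) ∈ ∏ z : rootsOfUnity d K, (ptIdeal d f a c).map (twist z) := by
  simp only [map_twist_ptIdeal]
  rw [Ideal.prod_eq_iInf_of_pairwise_isCoprime]
  · simp only [Ideal.mem_iInf]
    exact fun z _ ↦ of_X_sub_C_mem_ptIdeal d f a _
  · intro z _ z' _ hzz'
    refine isCoprime_ptIdeal a fun h ↦ hzz' ?_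
    exact Subtype.ext (Units.ext (inv_injective (mul_right_cancel₀ hc h)))

variable [NeZero d]

theorem dvd_of_isPrincipal_ptIdeal_zero_pow (hf : Squarefree f) (hfd : f.natDegree.Coprime d)
    {a : K} (ha : f.IsRoot a) {k : ℕ} (hk : k < f.natDegree)
    (h : (ptIdeal d f a 0 ^ k).IsPrincipal) : d ∣ k := by
  obtain ⟨u, hu⟩ := h
  rw [← Ideal.span] at hu
  set w : CurveRing K d f := AdjoinRoot.of _ ((X - C a) ^ k) with hw
  have span_eq : Ideal.span {u ^ d} = Ideal.span {w} := by
    rw [← Ideal.span_singleton_pow, ← hu, pow_right_comm,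
      ptIdeal_zero_pow_eq_span (NeZero.ne d) hf ha, Ideal.span_singleton_pow, hw, map_pow]
  have hwu : w ∣ u ^ d := Ideal.span_singleton_le_span_singleton.1 span_eq.le
  have huw : u ^ d ∣ w := Ideal.span_singleton_le_span_singleton.1 span_eq.ge
  have hq : (X - C a) ^ k ≠ 0 := pow_ne_zero k (X_sub_C_ne_zero a)
  have hw0 : w ≠ 0 := (map_ne_zero_iff _ of_injective).2 hq
  have hu0 : u ^ d ≠ 0 := ne_zero_of_dvd_ne_zero hw0 huw
  have poleOrder_u : d * poleOrder u = d * k := by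
    calc d * poleOrder u = poleOrder (u ^ d) :=
          (poleOrder_pow hf.ne_zero hfd (ne_zero_pow (NeZero.ne d) hu0) d).symm
      _ = poleOrder w := (poleOrder_le_of_dvd hf.ne_zero hfd hw0 huw).antisymm
          (poleOrder_le_of_dvd hf.ne_zero hfd hu0 hwu)
      _ = d * k := by
          rw [hw, poleOrder_of hf.ne_zero hfd hq, natDegree_pow, natDegree_X_sub_C, mul_one]
  replace poleOrder_u := Nat.eq_of_mul_eq_mul_left (NeZero.pos d) poleOrder_u
  obtain ⟨q, rfl⟩ := exists_of_eq_of_poleOrder_lt (poleOrder_u.trans_lt hk)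
  have hq0 : q ≠ 0 := by
    rintro rfl
    simp [NeZero.ne d] at hu0
  rw [← poleOrder_u, poleOrder_of hf.ne_zero hfd hq0]
  exact dvd_mul_right d _

theorem isTorsionOfOrder_zero (hf : Squarefree f) (hfd : f.natDegree.Coprime d)
    (hdf : d < f.natDegree) {a : K} (ha : f.IsRoot a) : IsTorsionOfOrder d f a 0 d := by
  refine ⟨⟨NeZero.pos d, ?_⟩, fun k ⟨hk0, hk⟩ ↦ ?_⟩
  · rw [ptIdeal_zero_pow_eq_span (NeZero.ne d) hf ha]
    exact ⟨_, rfl⟩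
  · by_contra! hkd
    exact hkd.not_ge (Nat.le_of_dvd hk0
      (dvd_of_isPrincipal_ptIdeal_zero_pow hf hfd ha (hkd.trans hdf) hk))

section RootsOfUnity

variable [HasEnoughRootsOfUnity K d]

theorem poleOrder_le_of_ptIdeal_pow_eq_span (hf : f ≠ 0) (hfd : f.natDegree.Coprime d) {a c : K}
    (hc : c ≠ 0) {k : ℕ} {u : CurveRing K d f} (h : ptIdeal d f a c ^ k = Ideal.span {u}) :
    poleOrder u ≤ k := by
  obtain rfl | hu := eq_or_ne u 0
  · simp [poleOrder]
  have : Fintype (rootsOfUnity d K) := Fintype.ofFinite _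
  have prod_dvd : ∏ z : rootsOfUnity d K, twist z u ∣ AdjoinRoot.of _ ((X - C a) ^ k) := by
    have hmem := Ideal.pow_mem_pow (of_X_sub_C_mem_prod_map_twist (d := d) (f := f) a hc) k
    rw [← Ideal.mem_span_singleton, ← Ideal.prod_span_singleton, map_pow]
    simpa only [← Finset.prod_pow, ← Ideal.map_pow, h, Ideal.map_span, Set.image_singleton]
      using hmem
  have hq : (X - C a) ^ k ≠ 0 := pow_ne_zero k (X_sub_C_ne_zero a)
  have hq' : AdjoinRoot.of _ ((X - C a) ^ k) ≠ (0 : CurveRing K d f) :=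
    (map_ne_zero_iff _ of_injective).2 hq
  have twist_ne_zero (z : rootsOfUnity d K) : twist z u ≠ 0 :=
    ne_zero_of_dvd_ne_zero hq' ((Finset.dvd_prod_of_mem _ (Finset.mem_univ z)).trans prod_dvd)
  refine Nat.le_of_mul_le_mul_left ?_ (NeZero.pos d)
  calc d * poleOrder u = ∑ z : rootsOfUnity d K, poleOrder (twist z u) := by
        simp only [poleOrder_twist hf hfd _ hu, Finset.sum_const, Finset.card_univ, smul_eq_mul,
          ← Nat.card_eq_fintype_card, HasEnoughRootsOfUnity.natCard_rootsOfUnity]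
    _ = poleOrder (∏ z : rootsOfUnity d K, twist z u) :=
        (poleOrder_prod hf hfd _ fun z _ ↦ twist_ne_zero z).symm
    _ ≤ poleOrder (AdjoinRoot.of _ ((X - C a) ^ k)) := poleOrder_le_of_dvd hf hfd hq' prod_dvd
    _ = d * k := by rw [poleOrder_of hf hfd hq, natDegree_pow, natDegree_X_sub_C, mul_one]

theorem not_isPrincipal_ptIdeal_pow_of_hasEnoughRootsOfUnity (hfd : f.natDegree.Coprime d)
    (hd : d ≠ 1) {a c : K} (hac : c ^ d = f.eval a) (hc : c ≠ 0) {k : ℕ} (hk0 : k ≠ 0)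
    (hk : k < f.natDegree) : ¬ (ptIdeal d f a c ^ k).IsPrincipal := by
  have hf : f ≠ 0 := ne_zero_of_natDegree_gt hk
  rintro ⟨u, hu⟩
  rw [← Ideal.span] at hu
  obtain ⟨q, rfl⟩ := exists_of_eq_of_poleOrder_lt
    ((poleOrder_le_of_ptIdeal_pow_eq_span hf hfd hc hu).trans_lt hk)
  have : Nontrivial (rootsOfUnity d K) := by
    rw [← Finite.one_lt_card_iff_nontrivial, HasEnoughRootsOfUnity.natCard_rootsOfUnity]
    exact Nat.one_lt_iff_ne_zero_and_ne_one.2 ⟨NeZero.ne d, hd⟩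
  obtain ⟨z, hz⟩ := exists_ne (1 : rootsOfUnity d K)
  have map_twist_pow : ptIdeal d f a (((z : Kˣ) : K)⁻¹ * c) ^ k = ptIdeal d f a c ^ k := by
    rw [← map_twist_ptIdeal, ← Ideal.map_pow, hu, Ideal.map_span, Set.image_singleton, twist_of]
  have hzc : ((z : Kˣ) : K)⁻¹ * c ≠ c := by
    simpa [hc] using hz
  have hcop := (isCoprime_ptIdeal (d := d) (f := f) a hzc).pow (m := k) (n := k)
  rw [map_twist_pow, isCoprime_self, Ideal.isUnit_iff] at hcop
  exact ptIdeal_ne_top hac (top_le_iff.1 (hcop.ge.trans (Ideal.pow_le_self hk0)))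

end RootsOfUnity

theorem not_isPrincipal_ptIdeal_pow (hfd : f.natDegree.Coprime d) (hd : d ≠ 1)
    (hdK : (d : K) ≠ 0) {a c : K} (hac : c ^ d = f.eval a) (hc : c ≠ 0) {k : ℕ} (hk0 : k ≠ 0)
    (hk : k < f.natDegree) : ¬ (ptIdeal d f a c ^ k).IsPrincipal := by
  intro h
  have : NeZero (d : K) := ⟨hdK⟩
  let φ := algebraMap K (AlgebraicClosure K)
  have hφ := h.map_ringHom (baseChange φ)
  rw [Ideal.map_pow, map_baseChange_ptIdeal] at hφ
  refine not_isPrincipal_ptIdeal_pow_of_hasEnoughRootsOfUnity ?_ hd ?_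
    ((map_ne_zero φ).2 hc) hk0 ?_ hφ
  · rwa [natDegree_map]
  · rw [eval_map_apply, ← map_pow, hac]
  · rwa [natDegree_map]

theorem isTorsionOfOrder_iff_eq_zero (hf : Squarefree f) (hfd : f.natDegree.Coprime d)
    (hdf : d < f.natDegree) (hd : d ≠ 1) (hdK : (d : K) ≠ 0) {a c : K}
    (hac : c ^ d = f.eval a) : IsTorsionOfOrder d f a c d ↔ c = 0 := by
  constructor
  · intro h
    by_contra hc
    exact not_isPrincipal_ptIdeal_pow hfd hd hdK hac hc (NeZero.ne d) hdf h.1.2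
  · rintro rfl
    refine isTorsionOfOrder_zero hf hfd hdf ?_
    rw [IsRoot, ← hac, zero_pow (NeZero.ne d)]

end PointIdeal

end CurveRing

theorem stmt_1_general {K : Type*} [Field K] (d : ℕ) (hd : 2 ≤ d) (hchar : ¬ (ringChar K ∣ d))
    (f : K[X]) (hdf : d < f.natDegree) (hfd : f.natDegree.Coprime d) (hsqf : Squarefree f) :
    (∀ a c : K, c ^ d = f.eval a →
      (IsTorsionOfOrder d f a c d ↔ c = 0)) ∧
    {P : K × K | P.2 ^ d = f.eval P.1 ∧ IsTorsionOfOrder d f P.1 P.2 d} =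
      {P : K × K | f.eval P.1 = 0 ∧ P.2 = 0} ∧
    {P : K × K | P.2 ^ d = f.eval P.1 ∧ IsTorsionOfOrder d f P.1 P.2 d}.ncard =
      (f.rootSet K).ncard := by
  have : NeZero d := ⟨by omega⟩
  have torsion_iff (a c : K) (hac : c ^ d = f.eval a) : IsTorsionOfOrder d f a c d ↔ c = 0 :=
    CurveRing.isTorsionOfOrder_iff_eq_zero hsqf hfd hdf (by omega)
      (mt (ringChar.spec K d).1 hchar) hac
  have torsion_eq : {P : K × K | P.2 ^ d = f.eval P.1 ∧ IsTorsionOfOrder d f P.1 P.2 d} =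
      {P : K × K | f.eval P.1 = 0 ∧ P.2 = 0} := by
    ext ⟨a, c⟩
    constructor
    · rintro ⟨hac, h⟩
      obtain rfl : c = 0 := (torsion_iff a c hac).1 h
      exact ⟨by simpa [NeZero.ne d] using hac.symm, rfl⟩
    · rintro ⟨ha, rfl : c = 0⟩
      have hac : 0 ^ d = f.eval a := by rw [ha, zero_pow (NeZero.ne d)]
      exact ⟨hac, (torsion_iff a 0 hac).2 rfl⟩
  have roots_eq : {P : K × K | f.eval P.1 = 0 ∧ P.2 = 0} = (fun a ↦ (a, 0)) '' f.rootSet K := by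
    ext ⟨a, c⟩
    simp [mem_rootSet, hsqf.ne_zero, eq_comm]
  refine ⟨torsion_iff, torsion_eq, ?_⟩
  rw [torsion_eq, roots_eq, Set.ncard_image_of_injective _ (Prod.mk_left_injective 0)]

theorem stmt_1 {K : Type*} [Field K] [IsAlgClosed K] (d n : ℕ)
    (hd : 2 ≤ d) (hdn : d < n) (hgcd : Nat.gcd n d = 1)
    (hchar : ¬ (ringChar K ∣ d))
    (f : K[X]) (hmonic : f.Monic) (hdeg : f.natDegree = n) (hsqf : Squarefree f)
    (hDed : IsDedekindDomain (CurveRing K d f)) :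
    (∀ a c : K, c ^ d = f.eval a →
      (IsTorsionOfOrder d f a c d ↔ c = 0)) ∧
    {P : K × K | P.2 ^ d = f.eval P.1 ∧ IsTorsionOfOrder d f P.1 P.2 d} =
      {P : K × K | f.eval P.1 = 0 ∧ P.2 = 0} ∧
    {P : K × K | P.2 ^ d = f.eval P.1 ∧ IsTorsionOfOrder d f P.1 P.2 d}.ncard = n := by
  subst hdeg
  have card_roots : (f.rootSet K).ncard = f.natDegree := by
    rw [Set.ncard_eq_toFinset_card', Set.toFinset_card]
    exact card_rootSet_eq_natDegree (PerfectField.separable_iff_squarefree.2 hsqf)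
      (IsAlgClosed.splits _)
  rw [← card_roots]
  exact stmt_1_general d hd hchar f hdn hgcd hsqf
end

section
/- Let w ∈ K be a root of f. Then in the Dedekind domain A, the principal ideal generated by the image of X − w equals the d-th power of the maximal ideal m_{(w,0)} = (X − w, Y). -/
open Polynomial

/-!
Since `y ^ d = f = (x - w) g`, every product of `d` factors from `(x - w, y)` is divisible by
`x - w`. Conversely, at a simple root `w` the elements `x - w` and `g` are coprime, so
`a (x - w) ^ d + b g = 1` for some `a` and `b`; multiplying by `x - w` expresses `x - w` through
`(x - w) ^ d` and `y ^ d`.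
-/

section CommSemiring

variable {R : Type*} [CommSemiring R]

theorem ideal_sup_pow_le_sup_pow (I J : Ideal R) (n : ℕ) : (I ⊔ J) ^ n ≤ I ⊔ J ^ n := by
  induction n with
  | zero => simp only [pow_zero, le_sup_right]
  | succ n ih =>
    calc (I ⊔ J) ^ (n + 1) = (I ⊔ J) ^ n * (I ⊔ J) := pow_succ _ _
      _ ≤ (I ⊔ J ^ n) * (I ⊔ J) := Ideal.mul_mono_left ih
      _ = I * (I ⊔ J) ⊔ (J ^ n * I ⊔ J ^ n * J) := by rw [Ideal.sup_mul, Ideal.mul_sup (J ^ n)]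
      _ ≤ I ⊔ (I ⊔ J ^ n * J) :=
        sup_le_sup Ideal.mul_le_left (sup_le_sup_right Ideal.mul_le_right _)
      _ = I ⊔ J ^ (n + 1) := by rw [← sup_assoc, sup_idem, pow_succ]

theorem span_pair_pow_le_span_singleton {x y : R} {d : ℕ} (hxy : x ∣ y ^ d) :
    Ideal.span {x, y} ^ d ≤ Ideal.span {x} :=
  calc Ideal.span {x, y} ^ d = (Ideal.span {x} ⊔ Ideal.span {y}) ^ d := by rw [Ideal.span_insert]
    _ ≤ Ideal.span {x} ⊔ Ideal.span {y} ^ d := ideal_sup_pow_le_sup_pow _ _ d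
    _ = Ideal.span {x} := by
      rw [Ideal.span_singleton_pow, sup_eq_left, Ideal.span_singleton_le_span_singleton]
      exact hxy

theorem mem_span_pair_pow_of_isCoprime {x y g : R} {d : ℕ} (hy : y ^ d = x * g)
    (hxg : IsCoprime x g) : x ∈ Ideal.span {x, y} ^ d := by
  obtain ⟨a, b, hab⟩ : IsCoprime (x ^ d) g := hxg.pow_left
  have hxd : x ^ d ∈ Ideal.span {x, y} ^ d :=
    Ideal.pow_mem_pow (Ideal.subset_span (by simp)) d
  have hyd : y ^ d ∈ Ideal.span {x, y} ^ d :=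
    Ideal.pow_mem_pow (Ideal.subset_span (by simp)) d
  have hx : a * x * x ^ d + b * y ^ d = x :=
    calc a * x * x ^ d + b * y ^ d = x * (a * x ^ d + b * g) := by rw [hy]; ring
      _ = x := by rw [hab, mul_one]
  have hmem : a * x * x ^ d + b * y ^ d ∈ Ideal.span {x, y} ^ d :=
    Ideal.add_mem _ (Ideal.mul_mem_left _ _ hxd) (Ideal.mul_mem_left _ _ hyd)
  rwa [hx] at hmem

theorem span_singleton_eq_span_pair_pow_of_isCoprime {x y g : R} {d : ℕ} (hy : y ^ d = x * g)
    (hxg : IsCoprime x g) : Ideal.span {x} = Ideal.span {x, y} ^ d :=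
  le_antisymm ((Ideal.span_singleton_le_iff_mem _).mpr (mem_span_pair_pow_of_isCoprime hy hxg))
    (span_pair_pow_le_span_singleton ⟨g, hy⟩)

end CommSemiring

theorem ptIdeal_zero_right {K : Type*} [Field K] (d : ℕ) (f : K[X]) (a : K) :
    ptIdeal d f a 0 = Ideal.span {AdjoinRoot.of _ (X - C a), AdjoinRoot.root _} := by
  rw [ptIdeal, C_0, map_zero, sub_zero]

-- `root_X_pow_sub_C_pow` is the case of a field, which does not cover the base ring `K[X]`.
theorem root_X_pow_sub_C_pow_of_commRing {R : Type*} [CommRing R] (d : ℕ) (r : R) :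
    AdjoinRoot.root (X ^ d - C r) ^ d = AdjoinRoot.of (X ^ d - C r) r := by
  have root_relation := AdjoinRoot.eval₂_root (X ^ d - C r)
  rwa [eval₂_sub, eval₂_X_pow, eval₂_C, sub_eq_zero] at root_relation

theorem stmt_5_general {K : Type*} [Field K] (d : ℕ) (f : K[X]) (w : K) (hw : f.IsRoot w)
    (hw' : f.derivative.eval w ≠ 0) :
    Ideal.span {AdjoinRoot.of ((X : K[X][X]) ^ d - C f) (X - C w)} = ptIdeal d f w 0 ^ d := by
  have hfactor : (X - C w) * (f /ₘ (X - C w)) = f := mul_divByMonic_eq_iff_isRoot.mpr hw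
  have hcoprime : IsCoprime (X - C w) (f /ₘ (X - C w)) :=
    isCoprime_of_is_root_of_eval_derivative_ne_zero f w hw'
  rw [ptIdeal_zero_right]
  refine span_singleton_eq_span_pair_pow_of_isCoprime ?_ (hcoprime.map (AdjoinRoot.of _))
  rw [root_X_pow_sub_C_pow_of_commRing, ← map_mul, hfactor]

theorem stmt_5 {K : Type*} [Field K] [IsAlgClosed K] (d n : ℕ)
    (hd : 2 ≤ d) (hdn : d < n) (hgcd : Nat.gcd n d = 1)
    (hchar : ¬ (ringChar K ∣ d))
    (f : K[X]) (hmonic : f.Monic) (hdeg : f.natDegree = n) (hsqf : Squarefree f)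
    (hDed : IsDedekindDomain (CurveRing K d f))
    (w : K) (hw : f.eval w = 0) :
    Ideal.span {AdjoinRoot.of ((X : K[X][X]) ^ d - C f) (X - C w)} =
      ptIdeal d f w 0 ^ d := by
  have hsep : f.Separable := PerfectField.separable_iff_squarefree.mpr hsqf
  exact stmt_5_general d f w hw (hsep.aeval_derivative_ne_zero hw)
end

section
/- Let ζ ∈ K be a primitive d-th root of unity and let σ : A → A be the ring automorphism of A that fixes K and the image of X and sends the image of Y to ζ·Y. Then for every nonzero ideal I of A, the product of the ideals σ^0(I)·σ^1(I)·…·σ^{d−1}(I) (the images of I under the iterates of σ) is a principal ideal of A. (This is the ideal-theoretic form of the statement that for every degree-zero divisor D on the smooth projective model, the divisor Σ_{i=0}^{d−1} ω^i D is principal, where ω is the order-d automorphism (x,y) ↦ (x,ζy).) -/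
open Polynomial

/-!
The product `∏ i, σ ^ i (I)` is an ideal norm. Since `I` is finitely generated, it is the content
ideal of some polynomial `p`. Over a Dedekind domain contents multiply, so the product is the
content ideal of `∏ i, σ ^ i (p)`, whose coefficients are fixed by `σ`. The ring of invariants is
the base ring, a principal ideal domain, and therefore the product is generated by one element of
the base ring.
-/

section ContentIdeal

lemma contentIdeal_le_iff {R : Type*} [Semiring R] {p : R[X]} {I : Ideal R} :
    p.contentIdeal ≤ I ↔ ∀ n, p.coeff n ∈ I := by
  refine ⟨fun h n ↦ h (coeff_mem_contentIdeal p n), fun h ↦ Ideal.span_le.mpr fun a ha ↦ ?_⟩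
  obtain ⟨n, -, rfl⟩ := mem_coeffs_iff.mp (Finset.mem_coe.mp ha)
  exact h n

lemma contentIdeal_C_mul {R : Type*} [CommSemiring R] (a : R) (p : R[X]) :
    (C a * p).contentIdeal = Ideal.span {a} * p.contentIdeal := by
  refine le_antisymm ?_ ?_
  · simpa only [contentIdeal_C] using contentIdeal_mul_le_mul_contentIdeal (C a) p
  · rw [contentIdeal_def p, Ideal.span_mul_span', Ideal.span_le, Set.singleton_mul]
    rintro _ ⟨b, hb, rfl⟩
    obtain ⟨n, -, rfl⟩ := mem_coeffs_iff.mp (Finset.mem_coe.mp hb)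
    simpa only [coeff_C_mul, SetLike.mem_coe] using coeff_mem_contentIdeal (C a * p) n

lemma exists_eq_C_mul_of_contentIdeal_isPrincipal {R : Type*} [CommRing R] [IsDomain R] {p : R[X]}
    (hp : p.contentIdeal.IsPrincipal) :
    ∃ (a : R) (q : R[X]), q.contentIdeal = ⊤ ∧ p = C a * q := by
  rcases eq_or_ne p 0 with rfl | hp0
  · exact ⟨0, 1, contentIdeal_one, by simp⟩
  obtain ⟨q, hq⟩ := hp.contentIdeal_generator_dvd
  have hspan : Ideal.span {hp.generator} = p.contentIdeal := hp.span_singleton_generator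
  have hgen : hp.generator ≠ 0 := fun h ↦ hp0 (by rw [hq, h, C_0, zero_mul])
  refine ⟨hp.generator, q, (Ideal.span_singleton_mul_right_inj hgen).mp ?_, hq⟩
  rw [← contentIdeal_C_mul, ← hq, Ideal.mul_top, hspan]

lemma contentIdeal_mul_of_isPrincipal {R : Type*} [CommRing R] [IsDomain R] {p q : R[X]}
    (hp : p.contentIdeal.IsPrincipal) (hq : q.contentIdeal.IsPrincipal) :
    (p * q).contentIdeal = p.contentIdeal * q.contentIdeal := by
  obtain ⟨a, p', hp', rfl⟩ := exists_eq_C_mul_of_contentIdeal_isPrincipal hp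
  obtain ⟨b, q', hq', rfl⟩ := exists_eq_C_mul_of_contentIdeal_isPrincipal hq
  rw [mul_mul_mul_comm, ← C_mul]
  simp only [contentIdeal_C_mul, hp', hq', contentIdeal_mul_eq_top_of_contentIdeal_eq_top,
    Ideal.mul_top, Ideal.span_singleton_mul_span_singleton]

lemma contentIdeal_mul {R : Type*} [CommRing R] [IsDedekindDomain R] (p q : R[X]) :
    (p * q).contentIdeal = p.contentIdeal * q.contentIdeal := by
  refine Ideal.eq_of_localization_maximal fun P _ ↦ ?_
  have : IsDedekindDomain (Localization.AtPrime P) :=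
    IsLocalization.AtPrime.isDedekindDomain R P _
  simp only [Ideal.map_mul, ← contentIdeal_map_eq_map_contentIdeal, Polynomial.map_mul]
  exact contentIdeal_mul_of_isPrincipal (IsPrincipalIdealRing.principal _)
    (IsPrincipalIdealRing.principal _)

lemma contentIdeal_prod {R ι : Type*} [CommRing R] [IsDedekindDomain R] (s : Finset ι)
    (p : ι → R[X]) : (∏ i ∈ s, p i).contentIdeal = ∏ i ∈ s, (p i).contentIdeal :=
  map_prod (MonoidHom.mk ⟨contentIdeal, contentIdeal_one.trans Ideal.one_eq_top.symm⟩
    (contentIdeal_mul (R := R))) p s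

lemma exists_contentIdeal_eq_of_fg {R : Type*} [CommSemiring R] {I : Ideal R} (hI : I.FG) :
    ∃ p : R[X], p.contentIdeal = I := by
  classical
  obtain ⟨n, s, rfl⟩ := Submodule.fg_iff_exists_fin_generating_family.mp hI
  refine ⟨ofFn n s, le_antisymm ?_ (Ideal.span_le.mpr ?_)⟩
  · refine contentIdeal_le_iff.mpr fun i ↦ ?_
    by_cases hi : i < n
    · rw [ofFn_coeff_eq_val_of_lt s hi]
      exact Ideal.subset_span ⟨_, rfl⟩
    · rw [ofFn_coeff_eq_zero_of_ge s (not_lt.mp hi)]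
      exact zero_mem _
  · rintro _ ⟨i, rfl⟩
    simpa only [ofFn_coeff_eq_val_of_lt s i.2, SetLike.mem_coe] using
      coeff_mem_contentIdeal (ofFn n s) i

end ContentIdeal

section IdealNorm

open scoped Pointwise

variable {B G : Type*} [CommRing B] [Group G] [MulSemiringAction G B]

lemma prod_smul_mem_lifts (A : Type*) [CommRing A] [Algebra A B] [Algebra.IsInvariant A B G]
    [Fintype G] (p : B[X]) : ∏ g : G, g • p ∈ lifts (algebraMap A B) := by
  refine (lifts_iff_coeff_lifts _).mpr fun n ↦ Algebra.IsInvariant.isInvariant (G := G) _ fun g ↦ ?_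
  rw [← coeff_smul, Finset.smul_prod_perm]

lemma contentIdeal_smul (g : G) (p : B[X]) : (g • p).contentIdeal = g • p.contentIdeal := by
  rw [smul_eq_map, contentIdeal_map_eq_map_contentIdeal, Ideal.pointwise_smul_def]

theorem exists_map_algebraMap_eq_prod_smul (A : Type*) [CommRing A] [Algebra A B]
    [Algebra.IsInvariant A B G] [Fintype G] [IsDedekindDomain B] (I : Ideal B) :
    ∃ J : Ideal A, J.map (algebraMap A B) = ∏ g : G, g • I := by
  obtain ⟨p, rfl⟩ := exists_contentIdeal_eq_of_fg (IsNoetherian.noetherian I)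
  obtain ⟨q, hq⟩ := (mem_lifts _).mp (prod_smul_mem_lifts (G := G) A p)
  exact ⟨q.contentIdeal, by
    simp only [← contentIdeal_map_eq_map_contentIdeal, hq, contentIdeal_prod, contentIdeal_smul]⟩

end IdealNorm

section Cyclic

open Subgroup

lemma prod_zpowers {G M : Type*} [Group G] [CommMonoid M] {x : G} (hx : IsOfFinOrder x)
    [Fintype (zpowers x)] (F : G → M) :
    ∏ g : zpowers x, F g = ∏ i ∈ Finset.range (orderOf x), F (x ^ i) := by
  rw [← Fin.prod_univ_eq_prod_range fun i ↦ F (x ^ i)]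
  exact (Fintype.prod_equiv (finEquivZPowers hx) _ _ fun _ ↦ rfl).symm

theorem prod_map_pow_isPrincipal {A B : Type*} [CommRing A] [IsPrincipalIdealRing A] [CommRing B]
    [IsDedekindDomain B] [Algebra A B] {σ : RingAut B} (hσ : IsOfFinOrder σ)
    [Algebra.IsInvariant A B (zpowers σ)] (I : Ideal B) :
    (∏ i ∈ Finset.range (orderOf σ), I.map (σ ^ i)).IsPrincipal := by
  have : Fintype (zpowers σ) := .ofEquiv _ (finEquivZPowers hσ)
  obtain ⟨J, hJ⟩ := exists_map_algebraMap_eq_prod_smul (G := zpowers σ) A I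
  rw [← prod_zpowers hσ fun τ ↦ I.map τ]
  exact hJ ▸ (IsPrincipalIdealRing.principal J).map_ringHom (algebraMap A B)

end Cyclic

lemma exists_degree_lt_and_mk_eq {R : Type*} [CommRing R] [Nontrivial R] {g : R[X]} (hg : g.Monic)
    (b : AdjoinRoot g) : ∃ p : R[X], p.degree < g.degree ∧ AdjoinRoot.mk g p = b := by
  obtain ⟨q, rfl⟩ := AdjoinRoot.mk_surjective b
  refine ⟨q %ₘ g, degree_modByMonic_lt q hg, ?_⟩
  rw [← AdjoinRoot.modByMonicHom_mk hg, AdjoinRoot.mk_leftInverse hg]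

/-- The automorphism `σ` of `R[Y]/(g)` is `R`-linear and scales the class of `Y` by `z`. For
`g = Y ^ d - f` this is the action of `(x, y) ↦ (x, z y)` on functions. -/
structure IsRootScaling {R : Type*} [CommRing R] {g : R[X]} (σ : RingAut (AdjoinRoot g))
    (z : R) : Prop where
  map_of (a : R) : σ (AdjoinRoot.of g a) = AdjoinRoot.of g a
  map_root : σ (AdjoinRoot.root g) = AdjoinRoot.of g z * AdjoinRoot.root g

namespace IsRootScaling

open AdjoinRoot Subgroup

section

variable {R : Type*} [CommRing R] {g : R[X]} {σ : RingAut (AdjoinRoot g)} {z : R}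

lemma pow (hσ : IsRootScaling σ z) (i : ℕ) : IsRootScaling (σ ^ i) (z ^ i) := by
  induction i with
  | zero => exact ⟨fun _ ↦ rfl, by simp⟩
  | succ i ih =>
    refine ⟨fun a ↦ by rw [pow_succ, RingAut.mul_apply, hσ.map_of, ih.map_of], ?_⟩
    rw [pow_succ, RingAut.mul_apply, hσ.map_root, map_mul, ih.map_of, ih.map_root, pow_succ,
      map_mul]
    ring

lemma map_mk (hσ : IsRootScaling σ z) (p : R[X]) :
    σ (AdjoinRoot.mk g p) = AdjoinRoot.mk g (p.comp (C z * X)) := by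
  induction p using Polynomial.induction_on' with
  | add p q hp hq => simp only [map_add, add_comp, hp, hq]
  | monomial n a =>
    simp only [← C_mul_X_pow_eq_monomial, map_mul, map_pow, mk_C, mk_X, hσ.map_of, hσ.map_root,
      mul_comp, C_comp, pow_comp, X_comp]

lemma eq_one (hσ : IsRootScaling σ 1) : σ = 1 := by
  refine RingEquiv.ext fun b ↦ ?_
  obtain ⟨p, rfl⟩ := mk_surjective b
  rw [hσ.map_mk, C_1, one_mul, comp_X, RingAut.one_apply]

lemma coeff_mul_pow_eq_of_map_mk_eq (hσ : IsRootScaling σ z) (hg : g.Monic) {p : R[X]}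
    (hp : p.degree < g.degree) (hfix : σ (AdjoinRoot.mk g p) = AdjoinRoot.mk g p) (n : ℕ) :
    p.coeff n * z ^ n = p.coeff n := by
  have hlt : (p.comp (C z * X) - p).degree < g.degree := by
    refine (degree_le_iff_coeff_zero _ _).mpr (fun m hm ↦ ?_) |>.trans_lt hp
    rw [coeff_sub, comp_C_mul_X_coeff, coeff_eq_zero_of_degree_lt hm, zero_mul, sub_zero]
  have hzero : p.comp (C z * X) - p = 0 := by
    by_contra h
    exact mk_ne_zero_of_degree_lt hg h hlt (by rw [map_sub, ← hσ.map_mk, hfix, sub_self])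
  rw [← comp_C_mul_X_coeff, sub_eq_zero.mp hzero]

end

variable {R : Type*} [CommRing R] {d : ℕ} {r ζ : R}
  {σ : RingAut (AdjoinRoot (X ^ d - C r))}

lemma orderOf_eq [Nontrivial R] (hσ : IsRootScaling σ ζ) (hζ : IsPrimitiveRoot ζ d) (hd : 0 < d) :
    orderOf σ = d := by
  refine (orderOf_eq_iff hd).mpr ⟨(hζ.pow_eq_one ▸ hσ.pow d).eq_one, fun m hmd hm hσm ↦ ?_⟩
  have hdeg : (X : R[X]).degree < (X ^ d - C r).degree := by
    rw [degree_X, degree_X_pow_sub_C hd]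
    exact_mod_cast (show 1 < d by omega)
  have hcoeff := (hσ.pow m).coeff_mul_pow_eq_of_map_mk_eq (monic_X_pow_sub_C r hd.ne') hdeg
    (by rw [hσm, RingAut.one_apply]) 1
  exact hζ.pow_ne_one_of_pos_of_lt hm.ne' hmd (by simpa using hcoeff)

lemma exists_of_eq_of_map_eq [IsDomain R] (hσ : IsRootScaling σ ζ) (hζ : IsPrimitiveRoot ζ d)
    (hd : 0 < d) {b : AdjoinRoot (X ^ d - C r)} (hb : σ b = b) : ∃ a : R, of _ a = b := by
  have hmonic := monic_X_pow_sub_C r hd.ne'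
  obtain ⟨p, hp, rfl⟩ := exists_degree_lt_and_mk_eq hmonic b
  suffices p = C (p.coeff 0) from ⟨p.coeff 0, by rw [← mk_C, ← this]⟩
  ext n
  rw [coeff_C]
  split_ifs with hn
  · rw [hn]
  · by_contra hpn
    have hnd : n < d := by
      rw [degree_X_pow_sub_C hd] at hp
      exact_mod_cast (le_degree_of_ne_zero hpn).trans_lt hp
    have hcoeff := hσ.coeff_mul_pow_eq_of_map_mk_eq hmonic hp hb n
    exact hζ.pow_ne_one_of_pos_of_lt hn hnd (mul_right_eq_self₀.mp hcoeff |>.resolve_right hpn)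

lemma isInvariant_zpowers [IsDomain R] (hσ : IsRootScaling σ ζ) (hζ : IsPrimitiveRoot ζ d)
    (hd : 0 < d) :
    Algebra.IsInvariant R (AdjoinRoot (X ^ d - C r)) (zpowers σ) where
  isInvariant _ hb := hσ.exists_of_eq_of_map_eq hζ hd (hb ⟨σ, mem_zpowers σ⟩)

end IsRootScaling

theorem stmt_6_general {R : Type*} [CommRing R] [IsDomain R] [IsPrincipalIdealRing R] {d : ℕ}
    (hd : 0 < d) {r : R} [IsDedekindDomain (AdjoinRoot (X ^ d - C r))] {ζ : R}
    (hζ : IsPrimitiveRoot ζ d) {σ : RingAut (AdjoinRoot (X ^ d - C r))}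
    (hσ : IsRootScaling σ ζ) (I : Ideal (AdjoinRoot (X ^ d - C r))) :
    (∏ i ∈ Finset.range d, I.map (σ ^ i)).IsPrincipal := by
  have horder : orderOf σ = d := hσ.orderOf_eq hζ hd
  have hfin : IsOfFinOrder σ := orderOf_pos_iff.mp (by rwa [horder])
  have := hσ.isInvariant_zpowers hζ hd
  simpa only [horder] using prod_map_pow_isPrincipal (A := R) hfin I

theorem stmt_6 {K : Type*} [Field K] [IsAlgClosed K] (d n : ℕ)
    (hd : 2 ≤ d) (hdn : d < n) (hgcd : Nat.gcd n d = 1)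
    (hchar : ¬ (ringChar K ∣ d))
    (f : K[X]) (hmonic : f.Monic) (hdeg : f.natDegree = n) (hsqf : Squarefree f)
    (hDed : IsDedekindDomain (CurveRing K d f))
    (ζ : K) (hζ : IsPrimitiveRoot ζ d)
    (σ : CurveRing K d f ≃+* CurveRing K d f)
    (hσK : ∀ k : K, σ (AdjoinRoot.of _ (C k)) = AdjoinRoot.of _ (C k))
    (hσX : σ (AdjoinRoot.of _ X) = AdjoinRoot.of _ X)
    (hσY : σ (AdjoinRoot.root _) =
      AdjoinRoot.of _ (C ζ) * AdjoinRoot.root _) :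
    ∀ I : Ideal (CurveRing K d f), I ≠ ⊥ →
      (∏ i ∈ Finset.range d, Ideal.map (σ ^ i) I).IsPrincipal := by
  have hσ : (σ : CurveRing K d f →+* CurveRing K d f).comp (AdjoinRoot.of _) = AdjoinRoot.of _ :=
    Polynomial.ringHom_ext hσK hσX
  exact fun I _ ↦ stmt_6_general (zero_lt_two.trans_le hd) (hζ.map_of_injective C_injective)
    ⟨RingHom.congr_fun hσ, hσY⟩ I
end
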